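/- Let f : ℝ → ℂ be twice differentiable, let k ∈ ℝ and n ∈ ℤ, and define g : ℝ² ∖ {0} → ℂ by g(x) = f(k‖x‖) · w(x)^n. Then for every x ≠ 0, writing r = ‖x‖, the derivative of the gradient field ∇g in the radial direction, i.e. the vector (D(∇g)(x))·ν(x) ∈ ℂ² where D(∇g)(x) is the Fréchet derivative of the map y ↦ ∇g(y) at x, equals k² f''(k r) w(x)^n ν(x) + (i n / r²)(k r f'(k r) − f(k r)) w(x)^n t(x). -/

import Mathlib

/-!
On `ℝ² ∖ {0}` the chain rule gives `dr = (x₁ dx₁ + x₂ dx₂) / r` and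
`dw = i w dθ` with `dθ = (-x₂ dx₁ + x₁ dx₂) / r²`, hence the classical polar formula
`∇g = k f'(kr) wⁿ ν + (i n f(kr) / r) wⁿ t` (`grad_eq`). The right-hand side is differentiable, so
`D(∇g)(x)·ν` is the derivative at `s = r` of `∇g` along the ray `s ↦ s ν(x)`, on which `w`, `ν` and
`t` are constant and only the one-variable functions `k f'(ks)` and `i n f(ks) / s` have to be
differentiated.
-/


/-- Euclidean norm on `ℝ²` (represented as `ℝ × ℝ`). -/
noncomputable def r2 (x : ℝ × ℝ) : ℝ := Real.sqrt (x.1 ^ 2 + x.2 ^ 2)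

/-- `w(x) = (x₁ + i x₂)/|x| = e^{iθ_x}` on `ℝ² ∖ {0}`. -/
noncomputable def wc (x : ℝ × ℝ) : ℂ := ((x.1 : ℂ) + Complex.I * (x.2 : ℂ)) / (r2 x : ℂ)

lemma sq_pos_of_ne {x : ℝ × ℝ} (hx : x ≠ 0) : 0 < x.1 ^ 2 + x.2 ^ 2 := by
  by_contra h
  apply hx
  ext
  · simp only [Prod.fst_zero]; nlinarith [sq_nonneg x.1, sq_nonneg x.2]
  · simp only [Prod.snd_zero]; nlinarith [sq_nonneg x.1, sq_nonneg x.2]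

lemma r2_pos {x : ℝ × ℝ} (hx : x ≠ 0) : 0 < r2 x := Real.sqrt_pos.2 (sq_pos_of_ne hx)

lemma r2_sq (x : ℝ × ℝ) : r2 x ^ 2 = x.1 ^ 2 + x.2 ^ 2 := Real.sq_sqrt (by positivity)

lemma wc_ne {x : ℝ × ℝ} (hx : x ≠ 0) : wc x ≠ 0 := by
  have hr : (r2 x : ℂ) ≠ 0 := by exact_mod_cast (r2_pos hx).ne'
  refine div_ne_zero (fun h => hx ?_) hr
  have h1 := congrArg Complex.re h
  have h2 := congrArg Complex.im h
  simp at h1 h2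
  exact Prod.ext h1 h2

lemma r2_smul {s : ℝ} (hs : 0 < s) (x : ℝ × ℝ) : r2 (s • x) = s * r2 x := by
  have : (s • x).1 ^ 2 + (s • x).2 ^ 2 = s ^ 2 * (x.1 ^ 2 + x.2 ^ 2) := by
    simp only [Prod.smul_fst, Prod.smul_snd, smul_eq_mul]; ring
  rw [r2, this, Real.sqrt_mul (sq_nonneg s), Real.sqrt_sq hs.le, r2]

lemma wc_smul {s : ℝ} (hs : 0 < s) (x : ℝ × ℝ) : wc (s • x) = wc x := by
  have : (s : ℂ) ≠ 0 := by exact_mod_cast hs.ne'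
  rw [wc, wc, r2_smul hs]
  simp only [Prod.smul_fst, Prod.smul_snd, smul_eq_mul, Complex.ofReal_mul]
  rw [← mul_div_mul_left ((x.1 : ℂ) + _) _ this]
  ring

lemma hasFDerivAt_r2 {x : ℝ × ℝ} (hx : x ≠ 0) :
    HasFDerivAt r2 ((x.1 / r2 x) • ContinuousLinearMap.fst ℝ ℝ ℝ
      + (x.2 / r2 x) • ContinuousLinearMap.snd ℝ ℝ ℝ) x := by
  have h := (((hasFDerivAt_fst (𝕜 := ℝ) (p := x)).pow 2).add
    ((hasFDerivAt_snd (𝕜 := ℝ) (p := x)).pow 2)).sqrt (sq_pos_of_ne hx).ne'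
  have hr := (r2_pos hx).ne'
  refine h.congr_fderiv ?_
  change (1 / (2 * r2 x)) • _ = _
  ext <;> simp <;> field_simp

/-- `dw = i w dθ`, with `dθ = (-x₂ dx₁ + x₁ dx₂) / r²`. -/
lemma hasFDerivAt_wc {x : ℝ × ℝ} (hx : x ≠ 0) :
    HasFDerivAt wc (((-x.2 / r2 x ^ 2) • ContinuousLinearMap.fst ℝ ℝ ℝ
      + (x.1 / r2 x ^ 2) • ContinuousLinearMap.snd ℝ ℝ ℝ).smulRight (Complex.I * wc x)) x := by
  have hr : (r2 x : ℂ) ≠ 0 := by exact_mod_cast (r2_pos hx).ne'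
  have h1 := Complex.ofRealCLM.hasFDerivAt.comp x (hasFDerivAt_fst (𝕜 := ℝ) (p := x))
  have h2 := Complex.ofRealCLM.hasFDerivAt.comp x (hasFDerivAt_snd (𝕜 := ℝ) (p := x))
  have h3 := Complex.ofRealCLM.hasFDerivAt.comp x (hasFDerivAt_r2 hx)
  have h := (h1.add (h2.const_mul Complex.I)).mul
    ((hasDerivAt_inv hr).comp_hasFDerivAt x h3)
  have hsq : (r2 x : ℂ) ^ 2 = (x.1 : ℂ) ^ 2 + (x.2 : ℂ) ^ 2 := by exact_mod_cast r2_sq x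
  have hI : Complex.I ^ 2 = -1 := Complex.I_sq
  refine (h.congr_fderiv ?_).congr_of_eventuallyEq (Filter.Eventually.of_forall fun y => ?_)
  · ext
    · simp [wc]
      field_simp
      linear_combination hsq + (x.2 : ℂ) ^ 2 * hI
    · simp [wc]
      field_simp
      linear_combination Complex.I * hsq - (x.1 * x.2 : ℂ) * hI
  · simp [wc, div_eq_mul_inv]

/-- The polar formula `∇g = k f'(kr) wⁿ ν + (i n f(kr) / r) wⁿ t`, in coordinates. -/
noncomputable def gradPolar (f : ℝ → ℂ) (k : ℝ) (n : ℤ) (x : ℝ × ℝ) : ℂ × ℂ :=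
  (k * deriv f (k * r2 x) * wc x ^ n * ((x.1 : ℂ) / r2 x)
      + Complex.I * n * f (k * r2 x) / r2 x * wc x ^ n * (-(x.2 : ℂ) / r2 x),
    k * deriv f (k * r2 x) * wc x ^ n * ((x.2 : ℂ) / r2 x)
      + Complex.I * n * f (k * r2 x) / r2 x * wc x ^ n * ((x.1 : ℂ) / r2 x))

lemma grad_eq {f : ℝ → ℂ} (hf : Differentiable ℝ f) (k : ℝ) (n : ℤ) {x : ℝ × ℝ} (hx : x ≠ 0) :
    (fderiv ℝ (fun x => f (k * r2 x) * wc x ^ n) x (1, 0),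
      fderiv ℝ (fun x => f (k * r2 x) * wc x ^ n) x (0, 1)) = gradPolar f k n x := by
  have hr : (r2 x : ℂ) ≠ 0 := by exact_mod_cast (r2_pos hx).ne'
  have hw := wc_ne hx
  have h1 := (hf (k * r2 x)).hasDerivAt.hasFDerivAt.comp x ((hasFDerivAt_r2 hx).const_mul k)
  have h2 := ((hasDerivAt_zpow n (wc x) (Or.inl hw)).hasFDerivAt.restrictScalars ℝ).comp x
    (hasFDerivAt_wc hx)
  have h : HasFDerivAt (fun x => f (k * r2 x) * wc x ^ n) _ x := h1.mul h2
  rw [h.fderiv]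
  simp only [gradPolar]
  ext1
  · simp [zpow_sub_one₀ hw]
    field_simp
    ring
  · simp [zpow_sub_one₀ hw]
    field_simp
    ring

lemma differentiableAt_gradPolar {f : ℝ → ℂ} (hf : Differentiable ℝ f)
    (hf' : Differentiable ℝ (deriv f)) (k : ℝ) (n : ℤ) {x : ℝ × ℝ} (hx : x ≠ 0) :
    DifferentiableAt ℝ (gradPolar f k n) x := by
  have hr : (r2 x : ℂ) ≠ 0 := by exact_mod_cast (r2_pos hx).ne'
  have d0 := (hasFDerivAt_r2 hx).differentiableAt
  have dr : DifferentiableAt ℝ (fun y => (r2 y : ℂ)) x :=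
    Complex.ofRealCLM.differentiableAt.comp x d0
  have dri : DifferentiableAt ℝ (fun y => (r2 y : ℂ)⁻¹) x := dr.inv hr
  have d1 : DifferentiableAt ℝ (fun y : ℝ × ℝ => (y.1 : ℂ)) x :=
    Complex.ofRealCLM.differentiableAt.comp x differentiableAt_fst
  have d2 : DifferentiableAt ℝ (fun y : ℝ × ℝ => (y.2 : ℂ)) x :=
    Complex.ofRealCLM.differentiableAt.comp x differentiableAt_snd
  have df : DifferentiableAt ℝ (fun y => f (k * r2 y)) x :=
    (hf _).comp x (d0.const_mul k)
  have df' : DifferentiableAt ℝ (fun y => deriv f (k * r2 y)) x :=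
    (hf' _).comp x (d0.const_mul k)
  have dw : DifferentiableAt ℝ (fun y => wc y ^ n) x :=
    (((hasDerivAt_zpow n (wc x) (Or.inl (wc_ne hx))).hasFDerivAt.restrictScalars ℝ).comp x
      (hasFDerivAt_wc hx)).differentiableAt
  unfold gradPolar
  simp only [div_eq_mul_inv]
  fun_prop

/-- Radial derivative of the gradient field: for `g(x) = f(k|x|) e^{inθ_x}` with `f`
twice differentiable and `G = ∇g = (∂₁g, ∂₂g)`, the Fréchet derivative of `G`
applied to the radial unit vector `ν(x) = x/|x|` satisfies, for `x ≠ 0` and `r = |x|`,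
`(DG(x))·ν(x) = k² f''(kr) e^{inθ} ν(x) + (i n / r²)(k r f'(kr) - f(kr)) e^{inθ} t(x)`. -/
theorem stmt9 (f : ℝ → ℂ) (hf : Differentiable ℝ f) (hf' : Differentiable ℝ (deriv f))
    (k : ℝ) (n : ℤ) :
    let g : ℝ × ℝ → ℂ := fun x => f (k * r2 x) * wc x ^ n
    let G : ℝ × ℝ → ℂ × ℂ := fun x => (fderiv ℝ g x (1, 0), fderiv ℝ g x (0, 1))
    ∀ x : ℝ × ℝ, x ≠ 0 →
      fderiv ℝ G x (x.1 / r2 x, x.2 / r2 x)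
        = ((k : ℂ) ^ 2 * deriv (deriv f) (k * r2 x) * wc x ^ n * ((x.1 / r2 x : ℝ) : ℂ)
             + Complex.I * (n : ℂ) / (r2 x : ℂ) ^ 2
                 * (((k * r2 x : ℝ) : ℂ) * deriv f (k * r2 x) - f (k * r2 x))
                 * wc x ^ n * ((-x.2 / r2 x : ℝ) : ℂ),
           (k : ℂ) ^ 2 * deriv (deriv f) (k * r2 x) * wc x ^ n * ((x.2 / r2 x : ℝ) : ℂ)
             + Complex.I * (n : ℂ) / (r2 x : ℂ) ^ 2
                 * (((k * r2 x : ℝ) : ℂ) * deriv f (k * r2 x) - f (k * r2 x))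
                 * wc x ^ n * ((x.1 / r2 x : ℝ) : ℂ)) := by
  intro g G x hx
  have hr := r2_pos hx
  have hrc : (r2 x : ℂ) ≠ 0 := by exact_mod_cast hr.ne'
  have hGH : G =ᶠ[nhds x] gradPolar f k n := by
    filter_upwards [isOpen_ne.mem_nhds hx] with y hy
    exact grad_eq hf k n hy
  rw [hGH.fderiv_eq]
  set ν : ℝ × ℝ := (x.1 / r2 x, x.2 / r2 x) with hν
  have hνx : ν = (r2 x)⁻¹ • x := by
    ext <;> simp [hν, div_eq_inv_mul]
  have hrν : r2 x • ν = x := by rw [hνx, smul_inv_smul₀ hr.ne']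
  have hr1 : r2 ν = 1 := by
    rw [hνx, r2_smul (inv_pos.2 hr), inv_mul_cancel₀ hr.ne']
  have hwν : wc ν = wc x := by rw [hνx, wc_smul (inv_pos.2 hr)]
  have hray : HasDerivAt (fun s : ℝ => s • ν) ν (r2 x) := by
    simpa using (hasDerivAt_id (r2 x)).smul_const ν
  have hd : HasFDerivAt (gradPolar f k n) (fderiv ℝ (gradPolar f k n) x) (r2 x • ν) := by
    rw [hrν]
    exact (differentiableAt_gradPolar hf hf' k n hx).hasFDerivAt
  have hA := hd.comp_hasDerivAt (r2 x) hray
  have hlin : HasDerivAt (fun s : ℝ => k * s) k (r2 x) := by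
    simpa using (hasDerivAt_id (r2 x)).const_mul k
  have e0 : HasDerivAt (fun s : ℝ => f (k * s)) (k • deriv f (k * r2 x)) (r2 x) :=
    (hf (k * r2 x)).hasDerivAt.scomp (r2 x) hlin
  have e1 : HasDerivAt (fun s : ℝ => deriv f (k * s)) (k • deriv (deriv f) (k * r2 x)) (r2 x) :=
    (hf' (k * r2 x)).hasDerivAt.scomp (r2 x) hlin
  have e2 := e0.div (hasDerivAt_id (r2 x)).ofReal_comp hrc
  -- The radial coefficient `P` and tangential coefficient `Q` of `∇g` along the ray.
  have hP := (e1.const_mul (k : ℂ)).mul_const (wc x ^ n)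
  have hQ := (e2.const_mul (Complex.I * n)).mul_const (wc x ^ n)
  have hB := ((hP.mul_const (ν.1 : ℂ)).add (hQ.mul_const (-(ν.2 : ℂ)))).prodMk
    ((hP.mul_const (ν.2 : ℂ)).add (hQ.mul_const (ν.1 : ℂ)))
  refine (hA.unique (hB.congr_of_eventuallyEq ?_)).trans ?_
  · filter_upwards [lt_mem_nhds hr] with s hs
    have hsc : (s : ℂ) ≠ 0 := by exact_mod_cast hs.ne'
    have : gradPolar f k n (s • ν) =
        (k * deriv f (k * s) * wc x ^ n * ν.1
            + Complex.I * n * (f (k * s) / s) * wc x ^ n * (-(ν.2 : ℂ)),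
          k * deriv f (k * s) * wc x ^ n * ν.2
            + Complex.I * n * (f (k * s) / s) * wc x ^ n * ν.1) := by
      simp only [gradPolar, r2_smul hs, wc_smul hs, hr1, hwν, mul_one, Prod.smul_fst,
        Prod.smul_snd, smul_eq_mul, Complex.ofReal_mul]
      ext1 <;> field_simp
    exact this
  simp only [hν]
  ext1
  · simp
    field_simp
  · simp
    field_simp
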